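/- arXiv:2410.19234 — 2 statements merged into one kernel-verified Lean document; each statement's English description precedes it below -/
import Mathlib

section
/- Let Ξ be a measurable space, P̂ a probability measure on Ξ, and 𝒫 a nonempty set of probability measures on Ξ. For θ ∈ [0,1] define the TRO ambiguity set 𝒫'_θ := {(1−θ)·P̂ + θ·Q : Q ∈ 𝒫}. Then the family {𝒫'_θ : θ ∈ [0,1]} is strictly increasing, i.e. 𝒫'_{θ₁} ⊊ 𝒫'_{θ₂} (proper inclusion) whenever 0 ≤ θ₁ < θ₂ ≤ 1, if and only if 𝒫 is star-shaped with star center P̂ and 𝒫 ≠ {P̂}. -/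
open MeasureTheory

/-- The mixture `(1-θ)·P + θ·Q` of two measures. -/
noncomputable def mix {Ξ : Type*} [MeasurableSpace Ξ] (θ : ℝ) (P Q : Measure Ξ) : Measure Ξ :=
  ENNReal.ofReal (1 - θ) • P + ENNReal.ofReal θ • Q

/-- The TRO ambiguity set `𝒜'_θ = {(1-θ)·P̂ + θ·Q : Q ∈ 𝒜}`. -/
def TROset {Ξ : Type*} [MeasurableSpace Ξ] (Phat : Measure Ξ) (𝒜 : Set (Measure Ξ)) (θ : ℝ) :
    Set (Measure Ξ) := {P | ∃ Q ∈ 𝒜, P = mix θ Phat Q}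

/-!
Evaluated on a measurable set `A`, mixing with `P̂` scales the differences `Q(A) - P̂(A)`, `Q ∈ 𝒜`,
by `θ`, and mixing twice multiplies the parameters. So `𝒜'_θ₁` lies in `𝒜'_θ₂` as soon as mixing
with parameter `θ₁ / θ₂` preserves `𝒜`, while `𝒜'_0 = {P̂}` and `𝒜'_1 = 𝒜` recover
star-shapedness from monotonicity. If `𝒜'_θ₂ ⊆ 𝒜'_θ₁` for some `θ₁ < θ₂`, then the differences form
a bounded set `s` of reals with `θ₂ • s ⊆ θ₁ • s`, and comparing the suprema of absolute values
forces `s ⊆ {0}`, that is, `𝒜 ⊆ {P̂}`.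
-/

open Set
open scoped NNReal Pointwise

theorem strictMonoOn_Icc_iff {α β : Type*} [Preorder α] [Preorder β] {f : α → β} {a b : α} :
    StrictMonoOn f (Icc a b) ↔ ∀ x y, a ≤ x → x < y → y ≤ b → f x < f y :=
  ⟨fun hf _ _ hx hxy hy => hf ⟨hx, hxy.le.trans hy⟩ ⟨hx.trans hxy.le, hy⟩ hxy,
    fun hf _ hx _ hy hxy => hf _ _ hx.1 hxy hy.2⟩

theorem subset_singleton_zero_of_smul_set_subset_smul_set {𝕜 E : Type*} [NormedField 𝕜]
    [NormedAddCommGroup E] [NormedSpace 𝕜 E] {s : Set E} (hs : Bornology.IsBounded s) {a b : 𝕜}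
    (hab : ‖a‖ < ‖b‖) (hsub : b • s ⊆ a • s) : s ⊆ {0} := by
  intro x hx
  have hbdd : BddAbove (norm '' s) := by
    obtain ⟨C, hC⟩ := hs.exists_norm_le
    exact ⟨C, forall_mem_image.2 hC⟩
  have hle {y : E} (hy : y ∈ s) : ‖y‖ ≤ sSup (norm '' s) :=
    le_csSup hbdd (mem_image_of_mem norm hy)
  have hb : 0 < ‖b‖ := (norm_nonneg a).trans_lt hab
  have hcontract : sSup (norm '' s) ≤ ‖a‖ * sSup (norm '' s) / ‖b‖ := by
    refine csSup_le ⟨_, mem_image_of_mem norm hx⟩ (forall_mem_image.2 fun y hy => ?_)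
    obtain ⟨z, hz, hzy : a • z = b • y⟩ := hsub (smul_mem_smul_set hy)
    rw [le_div_iff₀ hb]
    calc ‖y‖ * ‖b‖ = ‖a‖ * ‖z‖ := by rw [mul_comm, ← norm_smul, ← hzy, norm_smul]
      _ ≤ ‖a‖ * sSup (norm '' s) := by gcongr; exact hle hz
  rw [le_div_iff₀ hb] at hcontract
  have hsup : sSup (norm '' s) ≤ 0 := by nlinarith
  exact norm_le_zero_iff.1 ((hle hx).trans hsup)

section Mixtures

variable {Ξ : Type*} [MeasurableSpace Ξ] {P Q : Measure Ξ} {𝒜 : Set (Measure Ξ)} {θ θ₁ θ₂ : ℝ}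

theorem mix_zero (P Q : Measure Ξ) : mix 0 P Q = P := by
  simp [mix]

theorem mix_one (P Q : Measure Ξ) : mix 1 P Q = Q := by
  simp [mix]

theorem mix_mix {r : ℝ} (hθ : θ ∈ Icc (0 : ℝ) 1) (hr : r ≤ 1) (P Q : Measure Ξ) :
    mix θ P (mix r P Q) = mix (θ * r) P Q := by
  have hcoeff : ENNReal.ofReal (1 - θ) + ENNReal.ofReal θ * ENNReal.ofReal (1 - r) =
      ENNReal.ofReal (1 - θ * r) := by
    rw [← ENNReal.ofReal_mul hθ.1, ← ENNReal.ofReal_add (sub_nonneg.2 hθ.2)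
      (mul_nonneg hθ.1 (sub_nonneg.2 hr))]
    ring_nf
  simp only [mix, smul_add, smul_smul, ← add_assoc, ← add_smul, hcoeff, ENNReal.ofReal_mul hθ.1]

theorem measureReal_mix_sub_measureReal [IsFiniteMeasure P] [IsFiniteMeasure Q]
    (hθ : θ ∈ Icc (0 : ℝ) 1) (A : Set Ξ) :
    (mix θ P Q).real A - P.real A = θ * (Q.real A - P.real A) := by
  have hP : (ENNReal.ofReal (1 - θ) • P) A ≠ ⊤ :=
    ENNReal.mul_ne_top ENNReal.ofReal_ne_top (measure_ne_top P A)
  have hQ : (ENNReal.ofReal θ • Q) A ≠ ⊤ :=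
    ENNReal.mul_ne_top ENNReal.ofReal_ne_top (measure_ne_top Q A)
  rw [mix, measureReal_add_apply hP hQ, measureReal_ennreal_smul_apply,
    measureReal_ennreal_smul_apply, ENNReal.toReal_ofReal (sub_nonneg.2 hθ.2),
    ENNReal.toReal_ofReal hθ.1]
  ring

theorem mix_mem_TROset (hQ : Q ∈ 𝒜) : mix θ P Q ∈ TROset P 𝒜 θ :=
  ⟨Q, hQ, rfl⟩

theorem TROset_eq_image (P : Measure Ξ) (𝒜 : Set (Measure Ξ)) (θ : ℝ) :
    TROset P 𝒜 θ = mix θ P '' 𝒜 := by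
  simp only [TROset, image, eq_comm]

theorem TROset_zero (P : Measure Ξ) (h𝒜 : 𝒜.Nonempty) : TROset P 𝒜 0 = {P} := by
  simp only [TROset_eq_image, mix_zero, h𝒜.image_const]

theorem TROset_one (P : Measure Ξ) (𝒜 : Set (Measure Ξ)) : TROset P 𝒜 1 = 𝒜 := by
  simp only [TROset_eq_image, mix_one, image_id']

theorem TROset_nonempty_iff : (TROset P 𝒜 θ).Nonempty ↔ 𝒜.Nonempty := by
  rw [TROset_eq_image, image_nonempty]

/-- `𝒜` is star-shaped with star center `P`. The coefficients of `mix` take values in `ℝ≥0∞`, and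
`Measure Ξ` is not a real vector space, so `StarConvex ℝ P 𝒜` is not available. -/
def IsStarShapedAt (P : Measure Ξ) (𝒜 : Set (Measure Ξ)) : Prop :=
  P ∈ 𝒜 ∧ ∀ α ∈ Icc (0 : ℝ) 1, ∀ Q ∈ 𝒜, mix α P Q ∈ 𝒜

theorem IsStarShapedAt.monotoneOn_TROset (h : IsStarShapedAt P 𝒜) :
    MonotoneOn (TROset P 𝒜) (Icc 0 1) := by
  rintro θ₁ hθ₁ θ₂ hθ₂ hle _ ⟨Q, hQ, rfl⟩
  rcases hθ₂.1.eq_or_lt with rfl | hpos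
  · obtain rfl : θ₁ = 0 := le_antisymm hle hθ₁.1
    exact mix_mem_TROset hQ
  have hratio : θ₁ / θ₂ ∈ Icc (0 : ℝ) 1 := ⟨div_nonneg hθ₁.1 hpos.le, (div_le_one hpos).2 hle⟩
  have hmix : mix θ₁ P Q = mix θ₂ P (mix (θ₁ / θ₂) P Q) := by
    rw [mix_mix hθ₂ hratio.2, mul_div_cancel₀ θ₁ hpos.ne']
  exact hmix ▸ mix_mem_TROset (h.2 _ hratio Q hQ)

theorem monotoneOn_TROset_iff (h𝒜 : 𝒜.Nonempty) :
    MonotoneOn (TROset P 𝒜) (Icc 0 1) ↔ IsStarShapedAt P 𝒜 := by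
  refine ⟨fun h => ?_, IsStarShapedAt.monotoneOn_TROset⟩
  have hsub {α : ℝ} (hα : α ∈ Icc (0 : ℝ) 1) : TROset P 𝒜 α ⊆ 𝒜 :=
    (h hα (right_mem_Icc.2 zero_le_one) hα.2).trans_eq (TROset_one P 𝒜)
  refine ⟨hsub (left_mem_Icc.2 zero_le_one) ?_, fun α hα Q hQ => hsub hα (mix_mem_TROset hQ)⟩
  rw [TROset_zero P h𝒜]
  exact mem_singleton P

theorem image_measureReal_sub_TROset [IsFiniteMeasure P] (h𝒜 : ∀ Q ∈ 𝒜, IsFiniteMeasure Q)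
    (hθ : θ ∈ Icc (0 : ℝ) 1) (A : Set Ξ) :
    (fun Q : Measure Ξ => Q.real A - P.real A) '' TROset P 𝒜 θ =
      θ • (fun Q : Measure Ξ => Q.real A - P.real A) '' 𝒜 := by
  rw [TROset_eq_image, image_image, ← image_smul, image_image]
  refine image_congr fun Q hQ => ?_
  have := h𝒜 Q hQ
  exact measureReal_mix_sub_measureReal hθ A

theorem isBounded_image_measureReal_sub {C : ℝ≥0} (hC : ∀ Q ∈ 𝒜, Q univ ≤ C) (A : Set Ξ) (c : ℝ) :
    Bornology.IsBounded ((fun Q : Measure Ξ => Q.real A - c) '' 𝒜) := by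
  refine (Metric.isBounded_Icc (0 - c) (C - c)).subset (image_subset_iff.2 fun Q hQ => ?_)
  have hle : Q.real A ≤ C :=
    ENNReal.toReal_le_coe_of_le_coe ((measure_mono (subset_univ A)).trans (hC Q hQ))
  exact ⟨sub_le_sub_right measureReal_nonneg c, sub_le_sub_right hle c⟩

theorem subset_singleton_of_TROset_subset_TROset [IsFiniteMeasure P] {C : ℝ≥0}
    (hC : ∀ Q ∈ 𝒜, Q univ ≤ C) (hθ₁ : 0 ≤ θ₁) (hlt : θ₁ < θ₂) (hθ₂ : θ₂ ≤ 1)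
    (hsub : TROset P 𝒜 θ₂ ⊆ TROset P 𝒜 θ₁) : 𝒜 ⊆ {P} := by
  have hfin : ∀ Q ∈ 𝒜, IsFiniteMeasure Q := fun Q hQ =>
    ⟨(hC Q hQ).trans_lt ENNReal.coe_lt_top⟩
  have hnorm : ‖θ₁‖ < ‖θ₂‖ := by
    rwa [Real.norm_of_nonneg hθ₁, Real.norm_of_nonneg (hθ₁.trans hlt.le)]
  intro Q hQ
  have := hfin Q hQ
  refine Measure.ext fun A _ => ?_
  have hscaled := image_mono (f := fun R : Measure Ξ => R.real A - P.real A) hsub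
  rw [image_measureReal_sub_TROset hfin ⟨hθ₁.trans hlt.le, hθ₂⟩,
    image_measureReal_sub_TROset hfin ⟨hθ₁, hlt.le.trans hθ₂⟩] at hscaled
  have hzero : Q.real A - P.real A = 0 := subset_singleton_zero_of_smul_set_subset_smul_set
    (isBounded_image_measureReal_sub hC A (P.real A)) hnorm hscaled (mem_image_of_mem _ hQ)
  exact (measureReal_eq_measureReal_iff).1 (sub_eq_zero.1 hzero)

theorem tro_strict_hierarchical_iff_starShaped_and_ne_general {C : ℝ≥0}
    (hC : ∀ Q ∈ 𝒜, Q univ ≤ C) :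
    StrictMonoOn (TROset P 𝒜) (Icc 0 1) ↔ IsStarShapedAt P 𝒜 ∧ 𝒜 ≠ {P} := by
  constructor
  · intro h
    have h01 : TROset P 𝒜 0 ⊂ TROset P 𝒜 1 :=
      h (left_mem_Icc.2 zero_le_one) (right_mem_Icc.2 zero_le_one) one_pos
    have h𝒜 : 𝒜.Nonempty := TROset_nonempty_iff.1 (nonempty_of_ssubset' h01)
    rw [TROset_zero P h𝒜, TROset_one] at h01
    exact ⟨(monotoneOn_TROset_iff h𝒜).1 h.monotoneOn, h01.ne'⟩
  · rintro ⟨hstar, hne⟩ θ₁ hθ₁ θ₂ hθ₂ hlt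
    have : IsFiniteMeasure P := ⟨(hC P hstar.1).trans_lt ENNReal.coe_lt_top⟩
    refine ⟨hstar.monotoneOn_TROset hθ₁ hθ₂ hlt.le, fun hsub => hne ?_⟩
    exact (subset_singleton_of_TROset_subset_TROset hC hθ₁.1 hlt hθ₂.2 hsub).antisymm
      (singleton_subset_iff.2 hstar.1)

end Mixtures

/-- The family `{𝒜'_θ : θ ∈ [0,1]}` is strictly increasing iff `𝒜` is star-shaped with
star center `P̂` and `𝒜 ≠ {P̂}`. -/
theorem tro_strict_hierarchical_iff_starShaped_and_ne
    {Ξ : Type*} [MeasurableSpace Ξ] (Phat : Measure Ξ) [IsProbabilityMeasure Phat]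
    (𝒜 : Set (Measure Ξ)) (h𝒜ne : 𝒜.Nonempty)
    (h𝒜prob : ∀ Q ∈ 𝒜, IsProbabilityMeasure Q) :
    (∀ θ₁ θ₂ : ℝ, 0 ≤ θ₁ → θ₁ < θ₂ → θ₂ ≤ 1 →
        TROset Phat 𝒜 θ₁ ⊂ TROset Phat 𝒜 θ₂) ↔
      ((Phat ∈ 𝒜 ∧ ∀ α ∈ Set.Icc (0:ℝ) 1, ∀ P ∈ 𝒜, mix α Phat P ∈ 𝒜) ∧ 𝒜 ≠ {Phat}) := by
  have hmass : ∀ Q ∈ 𝒜, Q univ ≤ (1 : ℝ≥0) := fun Q hQ => (h𝒜prob Q hQ).measure_univ.le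
  exact strictMonoOn_Icc_iff.symm.trans
    (tro_strict_hierarchical_iff_starShaped_and_ne_general hmass)
end

section
/- Let Ξ be a measurable space, P̂ a probability measure on Ξ, 𝒫 a nonempty set of probability measures on Ξ, X a nonempty subset of a real normed vector space, and f : X × Ξ → ℝ such that for every x ∈ X the function f(x,·) is integrable with respect to P̂ and with respect to every Q ∈ 𝒫, and there is C ≥ 0 with |∫ f(x,·) dP̂| ≤ C and |∫ f(x,·) dQ| ≤ C for all x ∈ X, Q ∈ 𝒫. For θ ∈ [0,1] let 𝒫'_θ := {(1−θ)·P̂ + θ·Q : Q ∈ 𝒫}, v(θ) := inf_{x∈X} sup_{P∈𝒫'_θ} ∫ f(x,·) dP, and X̂(θ) := {x ∈ X : sup_{P∈𝒫'_θ} ∫ f(x,·) dP = v(θ)}. Fix θ ∈ [0,1] and suppose X̂(0), X̂(1), X̂(θ) are nonempty and that for some τ > 0 the second-order growth condition holds at both endpoints: sup_{P∈𝒫'_0} ∫ f(x,·) dP ≥ v(0) + τ·(inf_{y∈X̂(0)} ‖x−y‖)² and sup_{P∈𝒫'_1} ∫ f(x,·) dP ≥ v(1) + τ·(inf_{y∈X̂(1)}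 ‖x−y‖)² for all x ∈ X. Then sup_{x∈X̂(θ)} inf_{z∈S} ‖x−z‖ ≤ √(6C·τ⁻¹·θ(1−θ))·(√θ + √(1−θ)), where S := {(1−θ)x' + θx'' : x' ∈ X̂(0), x'' ∈ X̂(1)} is the set of convex combinations of SAA and DRO optimal solutions. -/
open MeasureTheory

/-!
Write `R θ x` for the worst-case risk over the mixtures `(1-θ)·P + θ·Q`. It is affine in `θ`, so a
minimizer `x` of `R θ` can be tested against both a minimizer `p` of `R 0` and a minimizer `q` of
`R 1`. Averaging `R θ x ≤ R θ p` and `R θ x ≤ R θ q` with weights `1-θ` and `θ` bounds the weighted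
suboptimality of `x` in the two endpoint problems by `θ(1-θ)·((R 0 q - R 0 p) + (R 1 p - R 1 q))`.
Quadratic growth turns this into a bound on the weighted mean of the squared distances of `x` to the
two endpoint solution sets, and by Jensen's inequality this mean dominates the squared distance of
`x` to the set of convex combinations.
-/

open Metric Set
open scoped Pointwise

section ConvexCombination

theorem abs_convexCombo_le {a b C θ : ℝ} (hθ : θ ∈ Icc (0 : ℝ) 1) (ha : |a| ≤ C) (hb : |b| ≤ C) :
    |(1 - θ) * a + θ * b| ≤ C :=
  abs_le.2 <| convex_Icc (-C) C (abs_le.1 ha) (abs_le.1 hb) (sub_nonneg.2 hθ.2) hθ.1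
    (sub_add_cancel 1 θ)

theorem sq_convexCombo_le {θ : ℝ} (hθ : θ ∈ Icc (0 : ℝ) 1) (a b : ℝ) :
    ((1 - θ) * a + θ * b) ^ 2 ≤ (1 - θ) * a ^ 2 + θ * b ^ 2 :=
  even_two.convexOn_pow.2 (mem_univ a) (mem_univ b) (sub_nonneg.2 hθ.2) hθ.1 (sub_add_cancel 1 θ)

theorem one_le_sqrt_add_sqrt_one_sub {θ : ℝ} (hθ : θ ∈ Icc (0 : ℝ) 1) :
    1 ≤ √θ + √(1 - θ) := by
  have hle : ∀ t ∈ Icc (0 : ℝ) 1, t ≤ √t := fun t ht =>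
    Real.le_sqrt_of_sq_le (pow_le_of_le_one ht.1 ht.2 two_ne_zero)
  linarith [hle θ hθ, hle (1 - θ) ⟨sub_nonneg.2 hθ.2, sub_le_self 1 hθ.1⟩]

theorem sqrt_four_mul_le_sqrt_six_mul {C τ θ : ℝ} (hC : 0 ≤ C) (hτ : 0 ≤ τ)
    (hθ : θ ∈ Icc (0 : ℝ) 1) :
    √(4 * C * τ⁻¹ * θ * (1 - θ)) ≤ √(6 * C * τ⁻¹ * θ * (1 - θ)) * (√θ + √(1 - θ)) := by
  have hθ0 := hθ.1
  have hθ1 := sub_nonneg.2 hθ.2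
  calc √(4 * C * τ⁻¹ * θ * (1 - θ)) ≤ √(6 * C * τ⁻¹ * θ * (1 - θ)) := by gcongr; norm_num
    _ ≤ √(6 * C * τ⁻¹ * θ * (1 - θ)) * (√θ + √(1 - θ)) :=
      le_mul_of_one_le_right (Real.sqrt_nonneg _) (one_le_sqrt_add_sqrt_one_sub hθ)

end ConvexCombination

section InfDist

theorem infDist_add_add_le {E : Type*} [SeminormedAddCommGroup E] {s t : Set E}
    (hs : s.Nonempty) (ht : t.Nonempty) (x y : E) :
    infDist (x + y) (s + t) ≤ infDist x s + infDist y t := by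
  have := hs.to_subtype
  have := ht.to_subtype
  rw [infDist_eq_iInf (s := s), infDist_eq_iInf (s := t)]
  exact le_ciInf_add_ciInf fun a b =>
    (infDist_le_dist_of_mem (add_mem_add a.2 b.2)).trans (dist_add_add_le _ _ _ _)

theorem infDist_smul_smul {𝕜 E : Type*} [NormedDivisionRing 𝕜] [SeminormedAddCommGroup E]
    [Module 𝕜 E] [NormSMulClass 𝕜 E] {s : Set E} (hs : s.Nonempty) (c : 𝕜) (x : E) :
    infDist (c • x) (c • s) = ‖c‖ * infDist x s := by
  obtain rfl | hc := eq_or_ne c 0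
  · simp [zero_smul_set hs, ← singleton_zero]
  · exact infDist_smul₀ hc s x

theorem infDist_convexCombo_le {E : Type*} [SeminormedAddCommGroup E] [NormedSpace ℝ E]
    {s t : Set E} (hs : s.Nonempty) (ht : t.Nonempty) {θ : ℝ} (hθ : θ ∈ Icc (0 : ℝ) 1) (x : E) :
    infDist x ((1 - θ) • s + θ • t) ≤ (1 - θ) * infDist x s + θ * infDist x t :=
  calc infDist x ((1 - θ) • s + θ • t)
      = infDist ((1 - θ) • x + θ • x) ((1 - θ) • s + θ • t) := by
        rw [← add_smul, sub_add_cancel, one_smul]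
    _ ≤ infDist ((1 - θ) • x) ((1 - θ) • s) + infDist (θ • x) (θ • t) :=
        infDist_add_add_le hs.smul_set ht.smul_set _ _
    _ = (1 - θ) * infDist x s + θ * infDist x t := by
        rw [infDist_smul_smul hs, infDist_smul_smul ht,
          Real.norm_of_nonneg (sub_nonneg.2 hθ.2), Real.norm_of_nonneg hθ.1]

theorem iInf_norm_sub_eq_infDist {E : Type*} [SeminormedAddCommGroup E] (x : E) (s : Set E) :
    ⨅ y : s, ‖x - y‖ = infDist x s := by
  simp only [infDist_eq_iInf, dist_eq_norm]

end InfDist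

section Minimizers

/-- The solution set of the problem of minimizing `g` over `X`. When `g` is unbounded below on `X`
the infimum is the junk value `0`, and the set then need not consist of minimizers. -/
def argminOn {α : Type*} (g : α → ℝ) (X : Set α) : Set α :=
  {x ∈ X | g x = ⨅ y : X, g y}

/-- The second-order growth condition with modulus `τ`: over `X`, the function `g` exceeds its
minimum by at least `τ` times the squared distance to its solution set. -/
def HasQuadraticGrowthOn {α : Type*} [PseudoMetricSpace α] (τ : ℝ) (g : α → ℝ) (X : Set α) : Prop :=
  ∀ x ∈ X, (⨅ y : X, g y) + τ * infDist x (argminOn g X) ^ 2 ≤ g x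

theorem le_of_mem_argminOn {α : Type*} {g : α → ℝ} {X : Set α} (hg : BddBelow (g '' X)) {x y : α}
    (hx : x ∈ argminOn g X) (hy : y ∈ X) : g x ≤ g y := by
  rw [image_eq_range] at hg
  exact hx.2.trans_le (ciInf_le hg ⟨y, hy⟩)

theorem bddBelow_image_of_abs_le {α : Type*} {g : α → ℝ} {X : Set α} {C : ℝ}
    (hg : ∀ x ∈ X, |g x| ≤ C) : BddBelow (g '' X) :=
  ⟨-C, forall_mem_image.2 fun x hx => (abs_le.1 (hg x hx)).1⟩

theorem HasQuadraticGrowthOn.mul_infDist_sq_le {α : Type*} [PseudoMetricSpace α] {τ : ℝ}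
    {g : α → ℝ} {X : Set α} (h : HasQuadraticGrowthOn τ g X) {x p : α} (hx : x ∈ X)
    (hp : p ∈ argminOn g X) : τ * infDist x (argminOn g X) ^ 2 ≤ g x - g p := by
  linarith [h x hx, hp.2]

variable {α : Type*} {g₀ g₁ g : α → ℝ} {X : Set α} {θ : ℝ}

theorem suboptimality_convexCombo_le (hθ : θ ∈ Icc (0 : ℝ) 1) (hbdd : BddBelow (g '' X))
    (hg : ∀ x ∈ X, g x = (1 - θ) * g₀ x + θ * g₁ x) {x p q : α} (hx : x ∈ argminOn g X)
    (hp : p ∈ X) (hq : q ∈ X) :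
    (1 - θ) * (g₀ x - g₀ p) + θ * (g₁ x - g₁ q) ≤
      θ * (1 - θ) * ((g₀ q - g₀ p) + (g₁ p - g₁ q)) := by
  have hxp : g x ≤ g p := le_of_mem_argminOn hbdd hx hp
  have hxq : g x ≤ g q := le_of_mem_argminOn hbdd hx hq
  calc (1 - θ) * (g₀ x - g₀ p) + θ * (g₁ x - g₁ q)
      = (1 - θ) * g x + θ * g x - ((1 - θ) * g₀ p + θ * g₁ q) := by rw [hg x hx.1]; ring
    _ ≤ (1 - θ) * g p + θ * g q - ((1 - θ) * g₀ p + θ * g₁ q) := by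
        gcongr
        exacts [sub_nonneg.2 hθ.2, hθ.1]
    _ = θ * (1 - θ) * ((g₀ q - g₀ p) + (g₁ p - g₁ q)) := by rw [hg p hp, hg q hq]; ring

theorem suboptimality_convexCombo_le_of_abs_le (hθ : θ ∈ Icc (0 : ℝ) 1)
    (hg : ∀ x ∈ X, g x = (1 - θ) * g₀ x + θ * g₁ x) {C : ℝ} (h₀ : ∀ x ∈ X, |g₀ x| ≤ C)
    (h₁ : ∀ x ∈ X, |g₁ x| ≤ C) {x p q : α} (hx : x ∈ argminOn g X) (hp : p ∈ X) (hq : q ∈ X) :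
    (1 - θ) * (g₀ x - g₀ p) + θ * (g₁ x - g₁ q) ≤ 4 * C * θ * (1 - θ) := by
  have hbdd : BddBelow (g '' X) := bddBelow_image_of_abs_le fun y hy =>
    (hg y hy).symm ▸ abs_convexCombo_le hθ (h₀ y hy) (h₁ y hy)
  have hosc : (g₀ q - g₀ p) + (g₁ p - g₁ q) ≤ 4 * C := by
    linarith [abs_le.1 (h₀ p hp), abs_le.1 (h₀ q hq), abs_le.1 (h₁ p hp), abs_le.1 (h₁ q hq)]
  calc (1 - θ) * (g₀ x - g₀ p) + θ * (g₁ x - g₁ q)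
      ≤ θ * (1 - θ) * ((g₀ q - g₀ p) + (g₁ p - g₁ q)) :=
        suboptimality_convexCombo_le hθ hbdd hg hx hp hq
    _ ≤ θ * (1 - θ) * (4 * C) :=
        mul_le_mul_of_nonneg_left hosc (mul_nonneg hθ.1 (sub_nonneg.2 hθ.2))
    _ = 4 * C * θ * (1 - θ) := by ring

end Minimizers

theorem infDist_convexCombo_argminOn_le {E : Type*} [SeminormedAddCommGroup E] [NormedSpace ℝ E]
    {g₀ g₁ g : E → ℝ} {X : Set E} {θ τ C : ℝ} (hθ : θ ∈ Icc (0 : ℝ) 1) (hτ : 0 < τ)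
    (hg : ∀ x ∈ X, g x = (1 - θ) * g₀ x + θ * g₁ x)
    (h₀ : ∀ x ∈ X, |g₀ x| ≤ C) (h₁ : ∀ x ∈ X, |g₁ x| ≤ C)
    (hne₀ : (argminOn g₀ X).Nonempty) (hne₁ : (argminOn g₁ X).Nonempty)
    (growth₀ : HasQuadraticGrowthOn τ g₀ X) (growth₁ : HasQuadraticGrowthOn τ g₁ X)
    {x : E} (hx : x ∈ argminOn g X) :
    infDist x ((1 - θ) • argminOn g₀ X + θ • argminOn g₁ X) ≤
      √(4 * C * τ⁻¹ * θ * (1 - θ)) := by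
  obtain ⟨p, hp⟩ := hne₀
  obtain ⟨q, hq⟩ := hne₁
  set d₀ := infDist x (argminOn g₀ X)
  set d₁ := infDist x (argminOn g₁ X)
  have hmean : τ * ((1 - θ) * d₀ ^ 2 + θ * d₁ ^ 2) ≤ 4 * C * θ * (1 - θ) :=
    calc τ * ((1 - θ) * d₀ ^ 2 + θ * d₁ ^ 2)
        = (1 - θ) * (τ * d₀ ^ 2) + θ * (τ * d₁ ^ 2) := by ring
      _ ≤ (1 - θ) * (g₀ x - g₀ p) + θ * (g₁ x - g₁ q) := by
          gcongr
          exacts [sub_nonneg.2 hθ.2, growth₀.mul_infDist_sq_le hx.1 hp, hθ.1,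
            growth₁.mul_infDist_sq_le hx.1 hq]
      _ ≤ 4 * C * θ * (1 - θ) :=
          suboptimality_convexCombo_le_of_abs_le hθ hg h₀ h₁ hx hp.1 hq.1
  refine (infDist_convexCombo_le ⟨p, hp⟩ ⟨q, hq⟩ hθ x).trans (Real.le_sqrt_of_sq_le ?_)
  calc ((1 - θ) * d₀ + θ * d₁) ^ 2
      ≤ (1 - θ) * d₀ ^ 2 + θ * d₁ ^ 2 := sq_convexCombo_le hθ d₀ d₁
    _ ≤ τ⁻¹ * (4 * C * θ * (1 - θ)) := (le_inv_mul_iff₀ hτ).2 hmean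
    _ = 4 * C * τ⁻¹ * θ * (1 - θ) := by ring

section WorstCaseRisk

variable {Ξ : Type*} [MeasurableSpace Ξ]

/-- The worst-case expectation of the loss `u` over the mixtures of the reference measure `P` with
the members of the ambiguity set `𝒜`, in proportions `1-θ` and `θ`. -/
noncomputable def worstCaseRisk (P : Measure Ξ) (𝒜 : Set (Measure Ξ)) (u : Ξ → ℝ) (θ : ℝ) : ℝ :=
  ⨆ Q : 𝒜, ∫ ξ, u ξ ∂mix θ P Q

theorem integral_mix {G : Type*} [NormedAddCommGroup G] [NormedSpace ℝ G] {P Q : Measure Ξ}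
    {u : Ξ → G} (hP : Integrable u P) (hQ : Integrable u Q) {θ : ℝ} (hθ : θ ∈ Icc (0 : ℝ) 1) :
    ∫ ξ, u ξ ∂mix θ P Q = (1 - θ) • ∫ ξ, u ξ ∂P + θ • ∫ ξ, u ξ ∂Q := by
  rw [mix, integral_add_measure (hP.smul_measure ENNReal.ofReal_ne_top)
    (hQ.smul_measure ENNReal.ofReal_ne_top), integral_smul_measure, integral_smul_measure,
    ENNReal.toReal_ofReal hθ.1, ENNReal.toReal_ofReal (sub_nonneg.2 hθ.2)]

variable {P : Measure Ξ} {𝒜 : Set (Measure Ξ)} {u : Ξ → ℝ} {C θ : ℝ}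

theorem worstCaseRisk_eq_integral_add_iSup (h𝒜 : 𝒜.Nonempty) (hP : Integrable u P)
    (hQ : ∀ Q ∈ 𝒜, Integrable u Q) (hbdd : BddAbove (range fun Q : 𝒜 => ∫ ξ, u ξ ∂(Q : Measure Ξ)))
    (hθ : θ ∈ Icc (0 : ℝ) 1) :
    worstCaseRisk P 𝒜 u θ = (1 - θ) * ∫ ξ, u ξ ∂P + θ * ⨆ Q : 𝒜, ∫ ξ, u ξ ∂(Q : Measure Ξ) := by
  have := h𝒜.to_subtype
  have hbdd' : BddAbove (range fun Q : 𝒜 => θ * ∫ ξ, u ξ ∂(Q : Measure Ξ)) := by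
    simpa only [← range_comp, Function.comp_def] using
      (monotone_mul_left_of_nonneg hθ.1).map_bddAbove hbdd
  calc worstCaseRisk P 𝒜 u θ
      = ⨆ Q : 𝒜, ((1 - θ) * ∫ ξ, u ξ ∂P + θ * ∫ ξ, u ξ ∂(Q : Measure Ξ)) :=
        iSup_congr fun Q => integral_mix hP (hQ Q Q.2) hθ
    _ = (1 - θ) * ∫ ξ, u ξ ∂P + θ * ⨆ Q : 𝒜, ∫ ξ, u ξ ∂(Q : Measure Ξ) := by
        rw [← add_ciSup hbdd', Real.mul_iSup_of_nonneg hθ.1]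

theorem worstCaseRisk_eq_convexCombo (h𝒜 : 𝒜.Nonempty) (hP : Integrable u P)
    (hQ : ∀ Q ∈ 𝒜, Integrable u Q) (hbdd : BddAbove (range fun Q : 𝒜 => ∫ ξ, u ξ ∂(Q : Measure Ξ)))
    (hθ : θ ∈ Icc (0 : ℝ) 1) :
    worstCaseRisk P 𝒜 u θ = (1 - θ) * worstCaseRisk P 𝒜 u 0 + θ * worstCaseRisk P 𝒜 u 1 := by
  have hrisk := fun t => worstCaseRisk_eq_integral_add_iSup (θ := t) h𝒜 hP hQ hbdd
  rw [hrisk θ hθ, hrisk 0 (by simp), hrisk 1 (by simp)]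
  ring

theorem abs_worstCaseRisk_le (h𝒜 : 𝒜.Nonempty) (hP : Integrable u P)
    (hQ : ∀ Q ∈ 𝒜, Integrable u Q) (hPC : |∫ ξ, u ξ ∂P| ≤ C) (hQC : ∀ Q ∈ 𝒜, |∫ ξ, u ξ ∂Q| ≤ C)
    (hθ : θ ∈ Icc (0 : ℝ) 1) : |worstCaseRisk P 𝒜 u θ| ≤ C := by
  have hmix : ∀ Q : 𝒜, |∫ ξ, u ξ ∂mix θ P Q| ≤ C := fun Q =>
    (integral_mix hP (hQ Q Q.2) hθ).symm ▸ abs_convexCombo_le hθ hPC (hQC Q Q.2)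
  have := h𝒜.to_subtype
  let Q₀ : 𝒜 := Classical.arbitrary 𝒜
  have hbdd : BddAbove (range fun Q : 𝒜 => ∫ ξ, u ξ ∂mix θ P Q) :=
    ⟨C, forall_mem_range.2 fun Q => (abs_le.1 (hmix Q)).2⟩
  exact abs_le.2 ⟨(abs_le.1 (hmix Q₀)).1.trans (le_ciSup hbdd Q₀),
    ciSup_le fun Q => (abs_le.1 (hmix Q)).2⟩

end WorstCaseRisk

theorem setOf_eq_smul_add_smul {R M : Type*} [Add M] [SMul R M] (a b : R) (s t : Set M) :
    {z | ∃ x ∈ s, ∃ y ∈ t, z = a • x + b • y} = a • s + b • t := by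
  ext z
  simp [mem_add, mem_smul_set, eq_comm]

theorem tro_solutions_vs_convex_combination_general
    {Ξ E : Type*} [MeasurableSpace Ξ] [SeminormedAddCommGroup E] [NormedSpace ℝ E] (X : Set E)
    (Phat : Measure Ξ) (𝒜 : Set (Measure Ξ)) (h𝒜ne : 𝒜.Nonempty) (f : E → Ξ → ℝ)
    (hint0 : ∀ x ∈ X, Integrable (f x) Phat)
    (hint : ∀ x ∈ X, ∀ Q ∈ 𝒜, Integrable (f x) Q)
    (C : ℝ)
    (hb0 : ∀ x ∈ X, |∫ ξ, f x ξ ∂Phat| ≤ C)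
    (hb : ∀ x ∈ X, ∀ Q ∈ 𝒜, |∫ ξ, f x ξ ∂Q| ≤ C)
    (v : ℝ → ℝ) (Xhat : ℝ → Set E)
    (hv : ∀ θ, v θ = ⨅ x : X, ⨆ Q : 𝒜, ∫ ξ, f (x : E) ξ ∂(mix θ Phat (Q : Measure Ξ)))
    (hXhat : ∀ θ, Xhat θ =
      {x ∈ X | (⨆ Q : 𝒜, ∫ ξ, f x ξ ∂(mix θ Phat (Q : Measure Ξ))) = v θ})
    (θ : ℝ) (hθ : θ ∈ Icc (0 : ℝ) 1)
    (hne0 : (Xhat 0).Nonempty) (hne1 : (Xhat 1).Nonempty)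
    (τ : ℝ) (hτ : 0 < τ)
    (growth0 : ∀ x ∈ X, v 0 + τ * (⨅ y : Xhat 0, ‖x - (y : E)‖) ^ 2 ≤
      ⨆ Q : 𝒜, ∫ ξ, f x ξ ∂(mix 0 Phat (Q : Measure Ξ)))
    (growth1 : ∀ x ∈ X, v 1 + τ * (⨅ y : Xhat 1, ‖x - (y : E)‖) ^ 2 ≤
      ⨆ Q : 𝒜, ∫ ξ, f x ξ ∂(mix 1 Phat (Q : Measure Ξ)))
    (S : Set E)
    (hS : S = {z | ∃ x' ∈ Xhat 0, ∃ x'' ∈ Xhat 1, z = (1 - θ) • x' + θ • x''})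
    (x : E) (hx : x ∈ Xhat θ) :
    ⨅ z : S, ‖x - (z : E)‖ ≤ √(4 * C * τ⁻¹ * θ * (1 - θ)) := by
  set R : ℝ → E → ℝ := fun t y => worstCaseRisk Phat 𝒜 (f y) t
  obtain rfl : v = fun t => ⨅ y : X, R t y := funext hv
  obtain rfl : Xhat = fun t => argminOn (R t) X := funext hXhat
  have hbdd : ∀ y ∈ X, BddAbove (range fun Q : 𝒜 => ∫ ξ, f y ξ ∂(Q : Measure Ξ)) := fun y hy =>
    ⟨C, forall_mem_range.2 fun Q => (abs_le.1 (hb y hy Q Q.2)).2⟩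
  have haffine : ∀ y ∈ X, R θ y = (1 - θ) * R 0 y + θ * R 1 y := fun y hy =>
    worstCaseRisk_eq_convexCombo h𝒜ne (hint0 y hy) (hint y hy) (hbdd y hy) hθ
  have hRC : ∀ t ∈ Icc (0 : ℝ) 1, ∀ y ∈ X, |R t y| ≤ C := fun t ht y hy =>
    abs_worstCaseRisk_le h𝒜ne (hint0 y hy) (hint y hy) (hb0 y hy) (hb y hy) ht
  simp only [iInf_norm_sub_eq_infDist] at growth0 growth1 ⊢
  rw [hS, setOf_eq_smul_add_smul]
  exact infDist_convexCombo_argminOn_le hθ hτ haffine (hRC 0 (by simp)) (hRC 1 (by simp))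
    hne0 hne1 growth0 growth1 hx

/-- The deviation of the set of TRO optimal solutions `X̂(θ)` from the set of convex
combinations of SAA and DRO optimal solutions is at most
`√(6C·τ⁻¹·θ(1−θ))·(√θ + √(1−θ))`. -/
theorem tro_solutions_vs_convex_combination
    {Ξ E : Type*} [MeasurableSpace Ξ] [NormedAddCommGroup E] [NormedSpace ℝ E]
    (X : Set E) (hXne : X.Nonempty)
    (Phat : Measure Ξ) [IsProbabilityMeasure Phat]
    (𝒜 : Set (Measure Ξ)) (h𝒜ne : 𝒜.Nonempty)
    (h𝒜prob : ∀ Q ∈ 𝒜, IsProbabilityMeasure Q)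
    (f : E → Ξ → ℝ)
    (hint0 : ∀ x ∈ X, Integrable (f x) Phat)
    (hint : ∀ x ∈ X, ∀ Q ∈ 𝒜, Integrable (f x) Q)
    (C : ℝ) (hC : 0 ≤ C)
    (hb0 : ∀ x ∈ X, |∫ ξ, f x ξ ∂Phat| ≤ C)
    (hb : ∀ x ∈ X, ∀ Q ∈ 𝒜, |∫ ξ, f x ξ ∂Q| ≤ C)
    (v : ℝ → ℝ) (Xhat : ℝ → Set E)
    (hv : ∀ θ, v θ = ⨅ x : X, ⨆ Q : 𝒜, ∫ ξ, f (x : E) ξ ∂(mix θ Phat (Q : Measure Ξ)))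
    (hXhat : ∀ θ, Xhat θ =
      {x ∈ X | (⨆ Q : 𝒜, ∫ ξ, f x ξ ∂(mix θ Phat (Q : Measure Ξ))) = v θ})
    (θ : ℝ) (hθ : θ ∈ Set.Icc (0:ℝ) 1)
    (hne0 : (Xhat 0).Nonempty) (hne1 : (Xhat 1).Nonempty) (hneθ : (Xhat θ).Nonempty)
    (τ : ℝ) (hτ : 0 < τ)
    (growth0 : ∀ x ∈ X, v 0 + τ * (⨅ y : Xhat 0, ‖x - (y : E)‖) ^ 2 ≤
      ⨆ Q : 𝒜, ∫ ξ, f x ξ ∂(mix 0 Phat (Q : Measure Ξ)))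
    (growth1 : ∀ x ∈ X, v 1 + τ * (⨅ y : Xhat 1, ‖x - (y : E)‖) ^ 2 ≤
      ⨆ Q : 𝒜, ∫ ξ, f x ξ ∂(mix 1 Phat (Q : Measure Ξ)))
    (S : Set E)
    (hS : S = {z | ∃ x' ∈ Xhat 0, ∃ x'' ∈ Xhat 1, z = (1 - θ) • x' + θ • x''}) :
    (⨆ x : Xhat θ, ⨅ z : S, ‖(x : E) - (z : E)‖) ≤
      Real.sqrt (6 * C * τ⁻¹ * θ * (1 - θ)) * (Real.sqrt θ + Real.sqrt (1 - θ)) := by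
  have := hneθ.to_subtype
  exact ciSup_le fun x => (tro_solutions_vs_convex_combination_general X Phat 𝒜 h𝒜ne f hint0 hint C
    hb0 hb v Xhat hv hXhat θ hθ hne0 hne1 τ hτ growth0 growth1 S hS x x.2).trans
    (sqrt_four_mul_le_sqrt_six_mul hC hτ.le hθ)
end
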